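/- Suppose there exists s ≥ 2 such that E[u(X, Z_1)^s] < ∞ and sup_{x,z} ‖g(x, z)/u(x, z)‖_∞ < ∞. Then there exists a constant c > 0 such that for every ℓ ≥ 1 the coupled level-ℓ gradient correction satisfies E[‖∇Δ_ℓ − E[∇Δ_ℓ]‖_2²] ≤ c·2^{−βℓ}, where β = min(s/2, 2). -/

import Mathlib

open MeasureTheory ProbabilityTheory Finset
open scoped ENNReal

noncomputable section

/-- Expectation (possibly vector-valued) of a functional `f` of a data point `x ~ ν`
together with `n` samples drawn i.i.d. (conditionally on `x`) from the proposal kernel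
`q`. -/
def jointExp {𝒳 𝒵 : Type*} [MeasurableSpace 𝒳] [MeasurableSpace 𝒵]
    {E : Type*} [NormedAddCommGroup E] [NormedSpace ℝ E]
    (ν : Measure 𝒳) (q : Kernel 𝒳 𝒵) (n : ℕ) (f : 𝒳 → (Fin n → 𝒵) → E) : E :=
  ∫ x, ∫ zs, f x zs ∂(Measure.pi fun _ : Fin n => q x) ∂ν

/-- The self-normalized (ratio) gradient estimator
`Ĝ = (∑ₖ g(x, zₖ)) / (∑ₖ u(x, zₖ))`. -/
def ratioEstimator {𝒳 𝒵 E : Type*} [AddCommGroup E] [Module ℝ E]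
    (u : 𝒳 → 𝒵 → ℝ) (g : 𝒳 → 𝒵 → E) {n : ℕ} (x : 𝒳) (zs : Fin n → 𝒵) : E :=
  (∑ k, u x (zs k))⁻¹ • ∑ k, g x (zs k)

/-- The coupled level gradient correction
`∇Δ = Ĝ_{2n} − ½(Ĝₙ⁽ᵃ⁾ + Ĝₙ⁽ᵇ⁾)`, where the ratio estimators are formed from all `2n`
samples, the first `n` samples and the last `n` samples respectively. -/
def gradCorrection {𝒳 𝒵 E : Type*} [AddCommGroup E] [Module ℝ E]
    (u : 𝒳 → 𝒵 → ℝ) (g : 𝒳 → 𝒵 → E) (n : ℕ) (x : 𝒳) (zs : Fin (2 * n) → 𝒵) : E :=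
  ratioEstimator u g x zs
    - (2 : ℝ)⁻¹ • (ratioEstimator u g x (fun k : Fin n => zs ⟨k.1, by have := k.2; omega⟩)
        + ratioEstimator u g x (fun k : Fin n => zs ⟨n + k.1, by have := k.2; omega⟩))

/-!
Subtracting from `g` the multiple `u • ∫ g` of the weight leaves the correction unchanged, so `g`
may be assumed centred given `X`. In terms of the half-sample means `A`, `B` of `u` and `a`, `b` of
`g`, the correction equals `(A - B) / (2 * (A + B)) • (a / A - b / B)`, a product of two
fluctuations: its square is of fourth order in the deviations `|A - 1|`, `|B - 1|`, `‖a‖`, `‖b‖`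
when these are small, and it is bounded always because `‖g‖ ≤ C * u`. Hence for `p = min s 4` the
square is dominated by the `p`-th powers of the deviations, whose expectations are `O(n ^ (-p / 2))`
by a Marcinkiewicz–Zygmund type inequality. The latter is proved by adding one summand at a time,
using the second order expansion of `‖a + b‖ ^ p` in a Hilbert space, whose first order term
integrates to zero.
-/

open scoped RealInnerProductSpace

lemma rpow_le_add_mul_sq_of_le_two {r y : ℝ} (hr : 1 ≤ r) (hr2 : r ≤ 2) (hy : 0 ≤ y) :
    y ^ r ≤ 1 + r * (y - 1) + (r - 1) * (y - 1) ^ 2 := by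
  have bernoulli : y ^ (r - 1) ≤ 1 + (r - 1) * (y - 1) := by
    simpa only [add_sub_cancel] using rpow_one_add_le_one_add_mul_self (s := y - 1)
      (p := r - 1) (by linarith) (by linarith) (by linarith)
  calc y ^ r = y ^ (r - 1) * y := by
        rw [← Real.rpow_add_one' hy (by linarith), sub_add_cancel]
    _ ≤ (1 + (r - 1) * (y - 1)) * y := by gcongr
    _ = 1 + r * (y - 1) + (r - 1) * (y - 1) ^ 2 := by ring

lemma rpow_le_add_mul_sq_of_rpow_sub_one_le {r y R : ℝ} (hr : 2 ≤ r) (hR : 1 ≤ R) (hy : 0 ≤ y)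
    (hyR : y ≤ R)
    (h : y ^ (r - 1) ≤ 1 + (r - 1) * (y - 1) + (r - 1) ^ 2 * R ^ (r - 1) * (y - 1) ^ 2) :
    y ^ r ≤ 1 + r * (y - 1) + r ^ 2 * R ^ r * (y - 1) ^ 2 := by
  have hRr : R ^ r = R ^ (r - 1) * R := by
    rw [← Real.rpow_add_one' (by linarith) (by linarith), sub_add_cancel]
  have hRr1 : 1 ≤ R ^ (r - 1) * R :=
    one_le_mul_of_one_le_of_one_le (Real.one_le_rpow hR (by linarith)) hR
  have hcoef : r - 1 + (r - 1) ^ 2 * R ^ (r - 1) * y ≤ r ^ 2 * R ^ r := by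
    calc r - 1 + (r - 1) ^ 2 * R ^ (r - 1) * y
        ≤ (r - 1) * (R ^ (r - 1) * R) + (r - 1) ^ 2 * (R ^ (r - 1) * R) := by
          rw [mul_assoc]
          gcongr
          exact le_mul_of_one_le_right (by linarith) hRr1
      _ ≤ r ^ 2 * R ^ r := by
          rw [hRr, ← add_mul]
          gcongr
          nlinarith
  calc y ^ r = y ^ (r - 1) * y := by
        rw [← Real.rpow_add_one' hy (by linarith), sub_add_cancel]
    _ ≤ (1 + (r - 1) * (y - 1) + (r - 1) ^ 2 * R ^ (r - 1) * (y - 1) ^ 2) * y := by gcongr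
    _ = 1 + r * (y - 1) + (r - 1 + (r - 1) ^ 2 * R ^ (r - 1) * y) * (y - 1) ^ 2 := by ring
    _ ≤ 1 + r * (y - 1) + r ^ 2 * R ^ r * (y - 1) ^ 2 := by gcongr

lemma rpow_le_add_mul_sq {r y R : ℝ} (hr : 1 ≤ r) (hR : 1 ≤ R) (hy : 0 ≤ y) (hyR : y ≤ R) :
    y ^ r ≤ 1 + r * (y - 1) + r ^ 2 * R ^ r * (y - 1) ^ 2 := by
  have of_le_two : ∀ r : ℝ, 1 ≤ r → r ≤ 2 →
      y ^ r ≤ 1 + r * (y - 1) + r ^ 2 * R ^ r * (y - 1) ^ 2 := fun r hr hr2 => by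
    have hRr : 1 ≤ R ^ r := Real.one_le_rpow hR (by linarith)
    have hcoef : r - 1 ≤ r ^ 2 * R ^ r := by nlinarith
    exact (rpow_le_add_mul_sq_of_le_two hr hr2 hy).trans (by gcongr)
  suffices of_le_natCast : ∀ n : ℕ, ∀ r : ℝ, 1 ≤ r → r ≤ n + 2 →
      y ^ r ≤ 1 + r * (y - 1) + r ^ 2 * R ^ r * (y - 1) ^ 2 from
    of_le_natCast ⌈r⌉₊ r hr ((Nat.le_ceil r).trans (by linarith))
  intro n
  induction n with
  | zero => exact fun r hr hr2 => of_le_two r hr (by simpa using hr2)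
  | succ n ih =>
    intro r hr hrn
    rcases le_total r 2 with hr2 | hr2
    · exact of_le_two r hr hr2
    · exact rpow_le_add_mul_sq_of_rpow_sub_one_le hr2 hR hy hyR
        (ih (r - 1) (by linarith) (by push_cast at hrn; linarith))

lemma rpow_mul_add_half_le {r k : ℝ} (hr : 1 ≤ r) (hk : 0 ≤ k) :
    (1 + 1 / (2 * (k + 1))) * k ^ r + (k + 1) ^ (r - 1) / 2 ≤ (k + 1) ^ r := by
  have hpow : k ^ r ≤ (k + 1) ^ (r - 1) * k := by
    rw [← sub_add_cancel r 1, Real.rpow_add_one' hk (by linarith), sub_add_cancel]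
    gcongr; linarith
  have hfrac : (1 + 1 / (2 * (k + 1))) * k + 1 / 2 ≤ k + 1 := by
    have : k / (k + 1) ≤ 1 := (div_le_one (by linarith)).2 (by linarith)
    calc (1 + 1 / (2 * (k + 1))) * k + 1 / 2 = k + (k / (k + 1)) / 2 + 1 / 2 := by field_simp
      _ ≤ k + 1 := by linarith
  calc (1 + 1 / (2 * (k + 1))) * k ^ r + (k + 1) ^ (r - 1) / 2
      ≤ (1 + 1 / (2 * (k + 1))) * ((k + 1) ^ (r - 1) * k) + (k + 1) ^ (r - 1) / 2 := by gcongr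
    _ = (k + 1) ^ (r - 1) * ((1 + 1 / (2 * (k + 1))) * k + 1 / 2) := by ring
    _ ≤ (k + 1) ^ (r - 1) * (k + 1) := by gcongr
    _ = (k + 1) ^ r := by
      rw [← Real.rpow_add_one' (by linarith) (by linarith), sub_add_cancel]

/-- The constant `c` in the smoothness inequality
`‖a + b‖ ^ p ≤ ‖a‖ ^ p + p ‖a‖ ^ (p - 2) ⟪a, b⟫ + c (‖a‖ ^ (p - 2) ‖b‖ ^ 2 + ‖b‖ ^ p)`
of a Hilbert space norm; no attempt is made to optimize it. -/
def smoothnessConst (p : ℝ) : ℝ := 4 * p ^ 2 * 2 ^ p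

lemma one_le_smoothnessConst {p : ℝ} (hp : 1 ≤ p) : 1 ≤ smoothnessConst p := by
  have h2p : (1 : ℝ) ≤ 2 ^ p := Real.one_le_rpow one_le_two (by linarith)
  unfold smoothnessConst
  nlinarith [mul_le_mul hp hp zero_le_one (by linarith)]

lemma norm_rpow_eq_norm_rpow_sub_two_mul_sq {E : Type*} [SeminormedAddGroup E] {p : ℝ}
    (hp : 2 ≤ p) (a : E) : ‖a‖ ^ p = ‖a‖ ^ (p - 2) * ‖a‖ ^ 2 := by
  rw [← Real.rpow_add_natCast' (norm_nonneg a) (by push_cast; linarith)]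
  congr 1; push_cast; ring

-- Young's inequality, with a first coefficient small enough, for `N = k + 1`, to be absorbed when
-- passing from `k ^ (p / 2)` to `(k + 1) ^ (p / 2)` in the moment inequality for sums.
lemma mul_norm_rpow_sub_two_mul_sq_le {E : Type*} [SeminormedAddGroup E] {p c N : ℝ} (hp : 2 ≤ p)
    (hc : 0 < c) (hN : 0 < N) (a b : E) :
    c * (‖a‖ ^ (p - 2) * ‖b‖ ^ 2)
      ≤ 1 / (2 * N) * ‖a‖ ^ p + c * (2 * c * N) ^ (p / 2 - 1) * ‖b‖ ^ p := by
  rcases le_total (2 * c * N * ‖b‖ ^ 2) (‖a‖ ^ 2) with h | h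
  · calc c * (‖a‖ ^ (p - 2) * ‖b‖ ^ 2)
        = 1 / (2 * N) * (‖a‖ ^ (p - 2) * (2 * c * N * ‖b‖ ^ 2)) := by field_simp
      _ ≤ 1 / (2 * N) * (‖a‖ ^ (p - 2) * ‖a‖ ^ 2) := by gcongr
      _ = 1 / (2 * N) * ‖a‖ ^ p := by rw [norm_rpow_eq_norm_rpow_sub_two_mul_sq hp]
      _ ≤ _ := le_add_of_nonneg_right (by positivity)
  · have sq_rpow : ∀ v : E, (‖v‖ ^ 2) ^ (p / 2 - 1) = ‖v‖ ^ (p - 2) := fun v => by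
      rw [← Real.rpow_natCast, ← Real.rpow_mul (norm_nonneg v)]
      congr 1; push_cast; ring
    have hpow : ‖a‖ ^ (p - 2) ≤ (2 * c * N) ^ (p / 2 - 1) * ‖b‖ ^ (p - 2) := by
      rw [← sq_rpow, ← sq_rpow, ← Real.mul_rpow (by positivity) (by positivity)]
      gcongr
      linarith
    calc c * (‖a‖ ^ (p - 2) * ‖b‖ ^ 2)
        ≤ c * ((2 * c * N) ^ (p / 2 - 1) * ‖b‖ ^ (p - 2) * ‖b‖ ^ 2) := by gcongr
      _ = c * (2 * c * N) ^ (p / 2 - 1) * ‖b‖ ^ p := by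
        rw [norm_rpow_eq_norm_rpow_sub_two_mul_sq hp b]; ring
      _ ≤ _ := le_add_of_nonneg_left (by positivity)

section Smoothness

variable {E : Type*} [NormedAddCommGroup E] [InnerProductSpace ℝ E] {p : ℝ}

lemma one_add_two_mul_inner_add_sq_div {a : E} (ha : a ≠ 0) (b : E) :
    1 + (2 * ⟪a, b⟫ + ‖b‖ ^ 2) / ‖a‖ ^ 2 = (‖a + b‖ / ‖a‖) ^ 2 := by
  have : ‖a‖ ≠ 0 := norm_ne_zero_iff.2 ha
  rw [div_pow, norm_add_sq_real]
  field_simp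
  ring

lemma norm_add_rpow_eq_mul_rpow {a : E} (ha : a ≠ 0) (b : E) :
    ‖a + b‖ ^ p = ‖a‖ ^ p * (1 + (2 * ⟪a, b⟫ + ‖b‖ ^ 2) / ‖a‖ ^ 2) ^ (p / 2) := by
  rw [one_add_two_mul_inner_add_sq_div ha, ← Real.rpow_natCast, ← Real.rpow_mul (by positivity),
    Nat.cast_ofNat, mul_div_cancel₀ p two_ne_zero, ← Real.mul_rpow (by positivity) (by positivity),
    mul_div_cancel₀ _ (norm_ne_zero_iff.2 ha)]

lemma one_add_two_mul_inner_add_sq_div_mem_Icc {a b : E} (ha : a ≠ 0) (hba : ‖b‖ ≤ ‖a‖) :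
    1 + (2 * ⟪a, b⟫ + ‖b‖ ^ 2) / ‖a‖ ^ 2 ∈ Set.Icc (0 : ℝ) 4 := by
  rw [one_add_two_mul_inner_add_sq_div ha]
  have hratio : ‖a + b‖ / ‖a‖ ≤ 2 := by
    rw [div_le_iff₀ (norm_pos_iff.2 ha)]
    linarith [norm_add_le a b]
  refine ⟨by positivity, ?_⟩
  calc (‖a + b‖ / ‖a‖) ^ 2 ≤ 2 ^ 2 := by gcongr
    _ = 4 := by norm_num

lemma sq_two_mul_inner_add_sq_div_le {a b : E} (ha : a ≠ 0) (hba : ‖b‖ ≤ ‖a‖) :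
    (2 * ⟪a, b⟫ + ‖b‖ ^ 2) ^ 2 / ‖a‖ ^ 2 ≤ 9 * ‖b‖ ^ 2 := by
  have habs : |2 * ⟪a, b⟫ + ‖b‖ ^ 2| ≤ 3 * (‖a‖ * ‖b‖) := by
    have hinner := abs_le.1 (abs_real_inner_le_norm a b)
    have hsq : ‖b‖ ^ 2 ≤ ‖a‖ * ‖b‖ := by rw [sq]; gcongr
    rw [abs_le]
    constructor <;> linarith [sq_nonneg ‖b‖]
  rw [div_le_iff₀ (pow_pos (norm_pos_iff.2 ha) 2), ← sq_abs]
  calc |2 * ⟪a, b⟫ + ‖b‖ ^ 2| ^ 2 ≤ (3 * (‖a‖ * ‖b‖)) ^ 2 := by gcongr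
    _ = 9 * ‖b‖ ^ 2 * ‖a‖ ^ 2 := by ring

lemma norm_add_rpow_le_of_norm_le (hp : 2 ≤ p) {a b : E} (hba : ‖b‖ ≤ ‖a‖) :
    ‖a + b‖ ^ p ≤ ‖a‖ ^ p + p * (‖a‖ ^ (p - 2) * ⟪a, b⟫)
      + smoothnessConst p * (‖a‖ ^ (p - 2) * ‖b‖ ^ 2) := by
  rcases eq_or_ne a 0 with rfl | ha
  · obtain rfl : b = 0 := norm_le_zero_iff.1 (by simpa using hba)
    simp
  have : 0 < ‖a‖ := norm_pos_iff.2 ha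
  set δ : ℝ := 2 * ⟪a, b⟫ + ‖b‖ ^ 2 with hδ
  have hδsq : δ ^ 2 / ‖a‖ ^ 2 ≤ 9 * ‖b‖ ^ 2 := sq_two_mul_inner_add_sq_div_le ha hba
  obtain ⟨hδ_lower, hδ_upper⟩ := one_add_two_mul_inner_add_sq_div_mem_Icc ha hba
  have h4 : (4 : ℝ) ^ (p / 2) = 2 ^ p := by
    rw [show (4 : ℝ) = 2 ^ (2 : ℝ) by norm_num, ← Real.rpow_mul zero_le_two,
      mul_div_cancel₀ _ two_ne_zero]
  have hconst : p / 2 + 9 * ((p / 2) ^ 2 * 2 ^ p) ≤ smoothnessConst p := by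
    have h2p : (1 : ℝ) ≤ 2 ^ p := Real.one_le_rpow one_le_two (by linarith)
    have : p / 2 ≤ p ^ 2 * 2 ^ p := by nlinarith
    unfold smoothnessConst
    nlinarith [mul_nonneg (sq_nonneg p) (by linarith : (0 : ℝ) ≤ 2 ^ p)]
  calc ‖a + b‖ ^ p = ‖a‖ ^ p * (1 + δ / ‖a‖ ^ 2) ^ (p / 2) := norm_add_rpow_eq_mul_rpow ha b
    _ ≤ ‖a‖ ^ p * (1 + p / 2 * (1 + δ / ‖a‖ ^ 2 - 1)
          + (p / 2) ^ 2 * 4 ^ (p / 2) * (1 + δ / ‖a‖ ^ 2 - 1) ^ 2) := by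
        gcongr
        exact rpow_le_add_mul_sq (by linarith) (by norm_num) hδ_lower hδ_upper
    _ = ‖a‖ ^ p + ‖a‖ ^ (p - 2) * (p / 2 * δ + (p / 2) ^ 2 * 2 ^ p * (δ ^ 2 / ‖a‖ ^ 2)) := by
        rw [h4, norm_rpow_eq_norm_rpow_sub_two_mul_sq hp]
        field_simp
        ring
    _ ≤ ‖a‖ ^ p + ‖a‖ ^ (p - 2) * (p / 2 * δ + (p / 2) ^ 2 * 2 ^ p * (9 * ‖b‖ ^ 2)) := by gcongr
    _ = ‖a‖ ^ p + p * (‖a‖ ^ (p - 2) * ⟪a, b⟫)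
        + (p / 2 + 9 * ((p / 2) ^ 2 * 2 ^ p)) * (‖a‖ ^ (p - 2) * ‖b‖ ^ 2) := by
        rw [hδ]; ring
    _ ≤ ‖a‖ ^ p + p * (‖a‖ ^ (p - 2) * ⟪a, b⟫)
        + smoothnessConst p * (‖a‖ ^ (p - 2) * ‖b‖ ^ 2) := by gcongr

lemma norm_add_rpow_le_of_le_norm (hp : 2 ≤ p) {a b : E} (hab : ‖a‖ ≤ ‖b‖) :
    ‖a + b‖ ^ p ≤ p * (‖a‖ ^ (p - 2) * ⟪a, b⟫) + smoothnessConst p * ‖b‖ ^ p := by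
  have hinner : -(‖b‖ ^ p) ≤ ‖a‖ ^ (p - 2) * ⟪a, b⟫ := by
    calc -(‖b‖ ^ p) = ‖b‖ ^ (p - 2) * -(‖b‖ * ‖b‖) := by
          rw [norm_rpow_eq_norm_rpow_sub_two_mul_sq hp]; ring
      _ ≤ ‖a‖ ^ (p - 2) * -(‖a‖ * ‖b‖) := by
          simp only [mul_neg, neg_le_neg_iff]
          gcongr
      _ ≤ ‖a‖ ^ (p - 2) * ⟪a, b⟫ := by
          gcongr
          exact (abs_le.1 (abs_real_inner_le_norm a b)).1
  have hconst : 2 ^ p + p ≤ smoothnessConst p := by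
    have h2p : (1 : ℝ) ≤ 2 ^ p := Real.one_le_rpow one_le_two (by linarith)
    have h4 : 4 ≤ p ^ 2 := by nlinarith
    unfold smoothnessConst
    nlinarith [mul_le_mul_of_nonneg_left h2p (sq_nonneg p)]
  calc ‖a + b‖ ^ p ≤ (2 * ‖b‖) ^ p := by
        gcongr
        linarith [norm_add_le a b]
    _ = 2 ^ p * ‖b‖ ^ p := Real.mul_rpow zero_le_two (norm_nonneg b)
    _ ≤ p * (‖a‖ ^ (p - 2) * ⟪a, b⟫) + (2 ^ p + p) * ‖b‖ ^ p := by
        linarith [mul_le_mul_of_nonneg_left hinner (by linarith : 0 ≤ p)]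
    _ ≤ p * (‖a‖ ^ (p - 2) * ⟪a, b⟫) + smoothnessConst p * ‖b‖ ^ p := by gcongr

lemma norm_add_rpow_le (hp : 2 ≤ p) (a b : E) :
    ‖a + b‖ ^ p ≤ ‖a‖ ^ p + p * (‖a‖ ^ (p - 2) * ⟪a, b⟫)
      + smoothnessConst p * (‖a‖ ^ (p - 2) * ‖b‖ ^ 2 + ‖b‖ ^ p) := by
  have hc : 0 ≤ smoothnessConst p := zero_le_one.trans (one_le_smoothnessConst (by linarith))
  rcases le_total ‖b‖ ‖a‖ with hba | hab
  · refine (norm_add_rpow_le_of_norm_le hp hba).trans ?_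
    gcongr
    exact le_add_of_nonneg_right (by positivity)
  · calc ‖a + b‖ ^ p ≤ 0 + p * (‖a‖ ^ (p - 2) * ⟪a, b⟫) + smoothnessConst p * (0 + ‖b‖ ^ p) := by
          simpa only [zero_add] using norm_add_rpow_le_of_le_norm hp hab
      _ ≤ _ := by gcongr <;> positivity

lemma norm_add_rpow_le_weighted (hp : 2 ≤ p) {N : ℝ} (hN : 1 ≤ N) (a b : E) :
    ‖a + b‖ ^ p ≤ (1 + 1 / (2 * N)) * ‖a‖ ^ p + p * (‖a‖ ^ (p - 2) * ⟪a, b⟫)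
      + (2 * smoothnessConst p) ^ (p / 2) * N ^ (p / 2 - 1) * ‖b‖ ^ p := by
  set c := smoothnessConst p
  have hc : 1 ≤ c := one_le_smoothnessConst (by linarith)
  have hcN : 1 ≤ 2 * c * N := by nlinarith
  set w : ℝ := (2 * c * N) ^ (p / 2 - 1)
  have hw1 : 1 ≤ w := Real.one_le_rpow hcN (by linarith)
  have young : c * (‖a‖ ^ (p - 2) * ‖b‖ ^ 2) ≤ 1 / (2 * N) * ‖a‖ ^ p + c * w * ‖b‖ ^ p :=
    mul_norm_rpow_sub_two_mul_sq_le hp (by linarith) (by linarith) a b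
  have hconst : c * w + c ≤ (2 * c) ^ (p / 2) * N ^ (p / 2 - 1) := by
    calc c * w + c ≤ c * w + c * w := by nlinarith
      _ = (2 * c) * ((2 * c) ^ (p / 2 - 1) * N ^ (p / 2 - 1)) := by
        rw [← Real.mul_rpow (by linarith) (by linarith)]; ring
      _ = (2 * c) ^ (p / 2) * N ^ (p / 2 - 1) := by
        rw [← mul_assoc, mul_comm (2 * c), ← Real.rpow_add_one (by linarith), sub_add_cancel]
  calc ‖a + b‖ ^ p ≤ ‖a‖ ^ p + p * (‖a‖ ^ (p - 2) * ⟪a, b⟫)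
        + c * (‖a‖ ^ (p - 2) * ‖b‖ ^ 2 + ‖b‖ ^ p) := norm_add_rpow_le hp a b
    _ ≤ (1 + 1 / (2 * N)) * ‖a‖ ^ p + p * (‖a‖ ^ (p - 2) * ⟪a, b⟫) + (c * w + c) * ‖b‖ ^ p := by
        linarith
    _ ≤ _ := by gcongr

end Smoothness

/-- The constant in the Marcinkiewicz–Zygmund type moment inequality
`integral_norm_sum_rpow_le` for sums of independent centred Hilbert space valued variables. -/
def momentConst (p : ℝ) : ℝ := 2 * (2 * smoothnessConst p) ^ (p / 2)

lemma momentConst_pos {p : ℝ} (hp : 1 ≤ p) : 0 < momentConst p := by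
  have := one_le_smoothnessConst hp
  unfold momentConst
  positivity

section MomentInequality

variable {Ω E : Type*} [MeasurableSpace Ω] [NormedAddCommGroup E] {P : Measure Ω} {p : ℝ}

lemma integrable_norm_rpow_of_memLp [IsFiniteMeasure P] {f : Ω → E} (hp : 0 ≤ p)
    (hf : MemLp f (ENNReal.ofReal p) P) : Integrable (fun ω => ‖f ω‖ ^ p) P := by
  simpa only [ENNReal.toReal_ofReal hp] using hf.integrable_norm_rpow'

variable [InnerProductSpace ℝ E] [CompleteSpace E] [MeasurableSpace E] [BorelSpace E]

lemma integrable_and_integral_norm_rpow_mul_inner_eq_zero [IsFiniteMeasure P] {T Y : Ω → E}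
    (hp : 2 ≤ p) (hTY : IndepFun T Y P) (hT : MemLp T (ENNReal.ofReal p) P)
    (hY : Integrable Y P) (hY0 : ∫ ω, Y ω ∂P = 0) :
    Integrable (fun ω => ‖T ω‖ ^ (p - 2) * ⟪T ω, Y ω⟫) P ∧
      ∫ ω, ‖T ω‖ ^ (p - 2) * ⟪T ω, Y ω⟫ ∂P = 0 := by
  set φ : E → E := fun v => ‖v‖ ^ (p - 2) • v with hφ
  have hφ_cont : Continuous φ := by
    have : Continuous fun v : E => ‖v‖ ^ (p - 2) :=
      continuous_norm.rpow_const fun _ => Or.inr (by linarith)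
    fun_prop
  have hφ_norm : ∀ v : E, ‖φ v‖ = ‖v‖ ^ (p - 1) := fun v => by
    rw [hφ, norm_smul, Real.norm_of_nonneg (by positivity),
      ← Real.rpow_add_one' (norm_nonneg v) (by linarith)]
    congr 1; ring
  have hφT : Integrable (fun ω => φ (T ω)) P := by
    refine (integrable_norm_iff (hφ_cont.comp_aestronglyMeasurable hT.1)).1 ?_
    simp only [hφ_norm]
    exact integrable_norm_rpow_of_le hT.1 (by linarith) (by linarith) (by linarith)
      (integrable_norm_rpow_of_memLp (by linarith) hT)
  have hind : IndepFun (fun ω => φ (T ω)) Y P := hTY.comp hφ_cont.measurable measurable_id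
  have hinner : ∀ ω, innerSL ℝ (φ (T ω)) (Y ω) = ‖T ω‖ ^ (p - 2) * ⟪T ω, Y ω⟫ := fun ω => by
    rw [innerSL_apply_apply, hφ, real_inner_smul_left]
  simp only [← hinner]
  refine ⟨hind.integrable_bilin hφT hY _, ?_⟩
  rw [hind.integral_bilin hφT hY, hY0, map_zero]

lemma integral_norm_add_rpow_le [IsFiniteMeasure P] {T Y : Ω → E} {N : ℝ} (hp : 2 ≤ p)
    (hN : 1 ≤ N) (hTY : IndepFun T Y P) (hT : MemLp T (ENNReal.ofReal p) P)
    (hY : MemLp Y (ENNReal.ofReal p) P) (hY0 : ∫ ω, Y ω ∂P = 0) :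
    ∫ ω, ‖T ω + Y ω‖ ^ p ∂P ≤ (1 + 1 / (2 * N)) * ∫ ω, ‖T ω‖ ^ p ∂P
      + (2 * smoothnessConst p) ^ (p / 2) * N ^ (p / 2 - 1) * ∫ ω, ‖Y ω‖ ^ p ∂P := by
  have hYint : Integrable Y P := hY.integrable (by simp; linarith)
  obtain ⟨hcross, hcross0⟩ :=
    integrable_and_integral_norm_rpow_mul_inner_eq_zero hp hTY hT hYint hY0
  have hTp := (integrable_norm_rpow_of_memLp (by linarith) hT).const_mul (1 + 1 / (2 * N))
  have hYp := (integrable_norm_rpow_of_memLp (by linarith) hY).const_mul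
    ((2 * smoothnessConst p) ^ (p / 2) * N ^ (p / 2 - 1))
  have hTcross : Integrable (fun ω => (1 + 1 / (2 * N)) * ‖T ω‖ ^ p
      + p * (‖T ω‖ ^ (p - 2) * ⟪T ω, Y ω⟫)) P := hTp.add (hcross.const_mul p)
  calc ∫ ω, ‖T ω + Y ω‖ ^ p ∂P
      ≤ ∫ ω, ((1 + 1 / (2 * N)) * ‖T ω‖ ^ p + p * (‖T ω‖ ^ (p - 2) * ⟪T ω, Y ω⟫)
          + (2 * smoothnessConst p) ^ (p / 2) * N ^ (p / 2 - 1) * ‖Y ω‖ ^ p) ∂P :=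
        integral_mono (integrable_norm_rpow_of_memLp (by linarith) (hT.add hY))
          (hTcross.add hYp)
          fun ω => norm_add_rpow_le_weighted hp hN (T ω) (Y ω)
    _ = _ := by
        rw [integral_add hTcross hYp, integral_add hTp (hcross.const_mul p), integral_const_mul,
          integral_const_mul, integral_const_mul, hcross0, mul_zero, add_zero]

lemma integral_norm_sum_rpow_le [SecondCountableTopology E] [IsProbabilityMeasure P]
    {ι : Type*} {Y : ι → Ω → E} {M : ℝ} (hp : 2 ≤ p) (hind : iIndepFun Y P)
    (hmeas : ∀ i, Measurable (Y i)) (hY : ∀ i, MemLp (Y i) (ENNReal.ofReal p) P)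
    (hY0 : ∀ i, ∫ ω, Y i ω ∂P = 0) (hM : ∀ i, ∫ ω, ‖Y i ω‖ ^ p ∂P ≤ M) (S : Finset ι) :
    ∫ ω, ‖∑ i ∈ S, Y i ω‖ ^ p ∂P ≤ momentConst p * M * (#S : ℝ) ^ (p / 2) := by
  classical
  have hc : 1 ≤ smoothnessConst p := one_le_smoothnessConst (by linarith)
  set K : ℝ := (2 * smoothnessConst p) ^ (p / 2) with hK
  induction S using Finset.induction_on with
  | empty =>
    simp [Real.zero_rpow (by linarith : p ≠ 0), Real.zero_rpow (by linarith : p / 2 ≠ 0)]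
  | insert i S hi ih =>
    have hM0 : 0 ≤ M := (integral_nonneg fun ω => by positivity).trans (hM i)
    set k : ℝ := (#S : ℝ)
    have hk : 0 ≤ k := Nat.cast_nonneg _
    have hSi : IndepFun (fun ω => ∑ j ∈ S, Y j ω) (Y i) P := by
      simpa only [Finset.sum_fn] using hind.indepFun_finsetSum_of_notMem hmeas hi
    calc ∫ ω, ‖∑ j ∈ insert i S, Y j ω‖ ^ p ∂P
        = ∫ ω, ‖∑ j ∈ S, Y j ω + Y i ω‖ ^ p ∂P := by
          simp only [sum_insert hi, add_comm (Y i _)]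
      _ ≤ (1 + 1 / (2 * (k + 1))) * ∫ ω, ‖∑ j ∈ S, Y j ω‖ ^ p ∂P
            + K * (k + 1) ^ (p / 2 - 1) * ∫ ω, ‖Y i ω‖ ^ p ∂P :=
          integral_norm_add_rpow_le hp (by linarith) hSi (memLp_finsetSum S fun j _ => hY j)
            (hY i) (hY0 i)
      _ ≤ (1 + 1 / (2 * (k + 1))) * (2 * K * M * k ^ (p / 2))
            + K * (k + 1) ^ (p / 2 - 1) * M := by
          gcongr
          exacts [ih, hM i]
      _ = 2 * K * M *
            ((1 + 1 / (2 * (k + 1))) * k ^ (p / 2) + (k + 1) ^ (p / 2 - 1) / 2) := by ring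
      _ ≤ 2 * K * M * (k + 1) ^ (p / 2) := by
          gcongr
          exact rpow_mul_add_half_le (by linarith) hk
      _ = momentConst p * M * (#(insert i S) : ℝ) ^ (p / 2) := by
          rw [card_insert_of_notMem hi, Nat.cast_succ, momentConst]

end MomentInequality

section SampleMean

/-- The average of `f` over a finite sample, with value `0` on the empty sample. -/
def sampleMean {𝒵 E : Type*} [AddCommGroup E] [Module ℝ E] (f : 𝒵 → E) {n : ℕ}
    (zs : Fin n → 𝒵) : E :=
  (n : ℝ)⁻¹ • ∑ k, f (zs k)

section Algebra

variable {𝒵 E : Type*} [AddCommGroup E] [Module ℝ E] {n : ℕ}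

lemma sampleMean_sub_const (f : 𝒵 → E) (c : E) (hn : n ≠ 0) (zs : Fin n → 𝒵) :
    sampleMean (fun z => f z - c) zs = sampleMean f zs - c := by
  simp only [sampleMean, sum_sub_distrib, sum_const, card_univ, Fintype.card_fin, smul_sub]
  rw [← Nat.cast_smul_eq_nsmul ℝ, inv_smul_smul₀ (Nat.cast_ne_zero.2 hn)]

lemma sampleMean_sub_smul_const (w : 𝒵 → ℝ) (f : 𝒵 → E) (c : E) (zs : Fin n → 𝒵) :
    sampleMean (fun z => f z - w z • c) zs = sampleMean f zs - sampleMean w zs • c := by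
  simp only [sampleMean, sum_sub_distrib, smul_sub, ← sum_smul, smul_eq_mul, mul_smul]

lemma sampleMean_pos {w : 𝒵 → ℝ} (hw : ∀ z, 0 < w z) (hn : n ≠ 0) (zs : Fin n → 𝒵) :
    0 < sampleMean w zs := by
  have : Nonempty (Fin n) := Fin.pos_iff_nonempty.1 (Nat.pos_of_ne_zero hn)
  exact smul_pos (by positivity) (sum_pos (fun k _ => hw (zs k)) univ_nonempty)

end Algebra

lemma norm_sampleMean_le {𝒵 E : Type*} [NormedAddCommGroup E] [NormedSpace ℝ E] {n : ℕ}
    {f : 𝒵 → E} {w : 𝒵 → ℝ} {C : ℝ} (hf : ∀ z, ‖f z‖ ≤ C * w z) (zs : Fin n → 𝒵) :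
    ‖sampleMean f zs‖ ≤ C * sampleMean w zs := by
  calc ‖sampleMean f zs‖ = (n : ℝ)⁻¹ * ‖∑ k, f (zs k)‖ := by
        rw [sampleMean, norm_smul, Real.norm_of_nonneg (by positivity)]
    _ ≤ (n : ℝ)⁻¹ * ∑ k, C * w (zs k) := by
        gcongr
        exact norm_sum_le_of_le _ fun k _ => hf (zs k)
    _ = C * sampleMean w zs := by rw [sampleMean, ← mul_sum, smul_eq_mul, mul_left_comm]

variable {𝒵 ι E : Type*} [MeasurableSpace 𝒵] [Fintype ι] [NormedAddCommGroup E]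
  {μ : Measure 𝒵} [IsProbabilityMeasure μ] {n : ℕ}

lemma memLp_comp_eval {f : 𝒵 → E} {p : ℝ≥0∞} (hf : MemLp f p μ) (i : ι) :
    MemLp (fun zs : ι → 𝒵 => f (zs i)) p (Measure.pi fun _ => μ) :=
  hf.comp_measurePreserving (measurePreserving_eval (fun _ : ι => μ) i)

lemma memLp_sampleMean [NormedSpace ℝ E] {f : 𝒵 → E} {p : ℝ≥0∞} (hf : MemLp f p μ)
    (e : Fin n → ι) :
    MemLp (fun zs : ι → 𝒵 => sampleMean f (zs ∘ e)) p (Measure.pi fun _ => μ) :=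
  (memLp_finsetSum univ fun k _ => memLp_comp_eval hf (e k)).const_smul (n : ℝ)⁻¹

lemma integral_norm_sampleMean_rpow_le [InnerProductSpace ℝ E] [CompleteSpace E]
    [MeasurableSpace E] [BorelSpace E] [SecondCountableTopology E] {f : 𝒵 → E} {p : ℝ}
    (hp : 2 ≤ p) (hn : n ≠ 0) (hf_meas : Measurable f) (hf : MemLp f (ENNReal.ofReal p) μ)
    (hf0 : ∫ z, f z ∂μ = 0) (e : Fin n ↪ ι) :
    ∫ zs : ι → 𝒵, ‖sampleMean f (zs ∘ e)‖ ^ p ∂(Measure.pi fun _ => μ)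
      ≤ momentConst p * (∫ z, ‖f z‖ ^ p ∂μ) * (n : ℝ) ^ (-(p / 2)) := by
  have hn0 : 0 < (n : ℝ) := Nat.cast_pos.2 (Nat.pos_of_ne_zero hn)
  have hind : iIndepFun (fun (k : Fin n) (zs : ι → 𝒵) => f (zs (e k))) (Measure.pi fun _ => μ) :=
    (iIndepFun_pi (X := fun _ : ι => f) fun _ => hf_meas.aemeasurable).precomp e.injective
  have hmean : ∀ k, ∫ zs : ι → 𝒵, f (zs (e k)) ∂(Measure.pi fun _ => μ) = 0 := fun k => by
    rw [integral_comp_eval (μ := fun _ : ι => μ) hf.1, hf0]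
  have hmoment : ∀ k, ∫ zs : ι → 𝒵, ‖f (zs (e k))‖ ^ p ∂(Measure.pi fun _ => μ)
      ≤ ∫ z, ‖f z‖ ^ p ∂μ := fun k =>
    (integral_comp_eval (μ := fun _ : ι => μ) (f := fun z => ‖f z‖ ^ p)
      (integrable_norm_rpow_of_memLp (by linarith) hf).1).le
  have hsum : ∫ zs : ι → 𝒵, ‖∑ k, f (zs (e k))‖ ^ p ∂(Measure.pi fun _ => μ)
      ≤ momentConst p * (∫ z, ‖f z‖ ^ p ∂μ) * (n : ℝ) ^ (p / 2) := by
    simpa only [card_univ, Fintype.card_fin] using integral_norm_sum_rpow_le hp hind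
      (fun k => hf_meas.comp (measurable_pi_apply _)) (fun k => memLp_comp_eval hf (e k))
      hmean hmoment univ
  calc ∫ zs : ι → 𝒵, ‖sampleMean f (zs ∘ e)‖ ^ p ∂(Measure.pi fun _ => μ)
      = ((n : ℝ)⁻¹) ^ p * ∫ zs : ι → 𝒵, ‖∑ k, f (zs (e k))‖ ^ p ∂(Measure.pi fun _ => μ) := by
        rw [← integral_const_mul]
        congr 1 with zs
        rw [sampleMean, norm_smul, Real.norm_of_nonneg (by positivity),
          Real.mul_rpow (by positivity) (norm_nonneg _)]
        rfl
    _ ≤ ((n : ℝ)⁻¹) ^ p * (momentConst p * (∫ z, ‖f z‖ ^ p ∂μ) * (n : ℝ) ^ (p / 2)) := by gcongr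
    _ = momentConst p * (∫ z, ‖f z‖ ^ p ∂μ) * (n : ℝ) ^ (-(p / 2)) := by
        have : ((n : ℝ)⁻¹) ^ p * (n : ℝ) ^ (p / 2) = (n : ℝ) ^ (-(p / 2)) := by
          rw [Real.inv_rpow hn0.le, ← Real.rpow_neg hn0.le, ← Real.rpow_add hn0]
          congr 1; ring
        rw [← this]; ring

end SampleMean

section SplitCorrection

/-- The pooled ratio `(a + b) / (A + B)` minus the average of the ratios `a / A` and `b / B`:
the form taken by `gradCorrection` in terms of the sample means of the two halves. -/
def splitCorrection {E : Type*} [AddCommGroup E] [Module ℝ E] (A B : ℝ) (a b : E) : E :=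
  (A + B)⁻¹ • (a + b) - (2 : ℝ)⁻¹ • (A⁻¹ • a + B⁻¹ • b)

section Algebra

variable {E : Type*} [AddCommGroup E] [Module ℝ E] {A B : ℝ}

lemma splitCorrection_eq_smul_sub (hA : 0 < A) (hB : 0 < B) (a b : E) :
    splitCorrection A B a b = ((A - B) / (2 * (A + B))) • (A⁻¹ • a - B⁻¹ • b) := by
  unfold splitCorrection
  match_scalars <;> (field_simp; ring)

lemma splitCorrection_sub_smul_const (hA : 0 < A) (hB : 0 < B) (a b c : E) :
    splitCorrection A B (a - A • c) (b - B • c) = splitCorrection A B a b := by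
  unfold splitCorrection
  match_scalars <;> field_simp
  ring

end Algebra

variable {E : Type*} [NormedAddCommGroup E] [NormedSpace ℝ E] {A B C : ℝ} {a b : E}

lemma norm_splitCorrection_le (hA : 0 < A) (hB : 0 < B) (ha : ‖a‖ ≤ C * A) (hb : ‖b‖ ≤ C * B) :
    ‖splitCorrection A B a b‖ ≤ C := by
  have ratio_le : ∀ {D : ℝ} {d : E}, 0 < D → ‖d‖ ≤ C * D → ‖D⁻¹ • d‖ ≤ C := fun hD hd => by
    rwa [norm_smul, norm_inv, Real.norm_of_nonneg hD.le, inv_mul_le_iff₀' hD]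
  have hcoef : |(A - B) / (2 * (A + B))| ≤ 1 / 2 := by
    rw [abs_div, abs_of_pos (by positivity : 0 < 2 * (A + B)), div_le_iff₀ (by positivity), abs_le]
    constructor <;> linarith
  calc ‖splitCorrection A B a b‖
      = |(A - B) / (2 * (A + B))| * ‖A⁻¹ • a - B⁻¹ • b‖ := by
        rw [splitCorrection_eq_smul_sub hA hB, norm_smul, Real.norm_eq_abs]
    _ ≤ 1 / 2 * (C + C) := by
        gcongr
        exact norm_sub_le_of_le (ratio_le hA ha) (ratio_le hB hb)
    _ = C := by ring

lemma norm_splitCorrection_le_four_mul_sq {m : ℝ} (hm : m ≤ 1 / 2) (hA : |A - 1| ≤ m)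
    (hB : |B - 1| ≤ m) (ha : ‖a‖ ≤ m) (hb : ‖b‖ ≤ m) :
    ‖splitCorrection A B a b‖ ≤ 4 * m ^ 2 := by
  have hm0 : 0 ≤ m := (norm_nonneg a).trans ha
  have half_le : ∀ {D : ℝ}, |D - 1| ≤ m → 1 / 2 ≤ D := fun hD => by linarith [(abs_le.1 hD).1]
  have ratio_le : ∀ {D : ℝ} {d : E}, 1 / 2 ≤ D → ‖d‖ ≤ m → ‖D⁻¹ • d‖ ≤ 2 * m :=
    fun {D d} hD hd => by
      rw [norm_smul, norm_inv, Real.norm_of_nonneg (by linarith)]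
      exact mul_le_mul (inv_le_of_inv_le₀ two_pos (by linarith)) hd (norm_nonneg d) zero_le_two
  have hA' := half_le hA
  have hB' := half_le hB
  have hcoef : |(A - B) / (2 * (A + B))| ≤ m := by
    have hAB : |A - B| ≤ m + m :=
      (abs_sub_le A 1 B).trans (add_le_add hA ((abs_sub_comm 1 B).trans_le hB))
    rw [abs_div, abs_of_pos (by linarith : 0 < 2 * (A + B)), div_le_iff₀ (by linarith)]
    nlinarith
  calc ‖splitCorrection A B a b‖
      = |(A - B) / (2 * (A + B))| * ‖A⁻¹ • a - B⁻¹ • b‖ := by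
        rw [splitCorrection_eq_smul_sub (by linarith) (by linarith), norm_smul, Real.norm_eq_abs]
    _ ≤ m * (2 * m + 2 * m) := by
        gcongr
        exact norm_sub_le_of_le (ratio_le hA' ha) (ratio_le hB' hb)
    _ = 4 * m ^ 2 := by ring

lemma norm_sq_splitCorrection_le {p : ℝ} (hp : 0 < p) (hp4 : p ≤ 4) (hA : 0 < A) (hB : 0 < B)
    (ha : ‖a‖ ≤ C * A) (hb : ‖b‖ ≤ C * B) :
    ‖splitCorrection A B a b‖ ^ 2
      ≤ 16 * (1 + C ^ 2) * (|A - 1| ^ p + |B - 1| ^ p + (‖a‖ ^ p + ‖b‖ ^ p)) := by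
  set S : ℝ := |A - 1| ^ p + |B - 1| ^ p + (‖a‖ ^ p + ‖b‖ ^ p)
  have hAp : 0 ≤ |A - 1| ^ p := by positivity
  have hBp : 0 ≤ |B - 1| ^ p := by positivity
  have hap : 0 ≤ ‖a‖ ^ p := by positivity
  have hbp : 0 ≤ ‖b‖ ^ p := by positivity
  have hS0 : 0 ≤ S := by positivity
  set m : ℝ := S ^ p⁻¹
  have hm0 : 0 ≤ m := by positivity
  have hmp : m ^ p = S := Real.rpow_inv_rpow hS0 hp.ne'
  have le_m : ∀ {t : ℝ}, 0 ≤ t → t ^ p ≤ S → t ≤ m := fun ht h =>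
    (Real.le_rpow_inv_iff_of_pos ht hS0 hp).2 h
  rcases le_total m (1 / 2) with hm2 | hm2
  · have hsq : ‖splitCorrection A B a b‖ ≤ 4 * m ^ 2 :=
      norm_splitCorrection_le_four_mul_sq hm2 (le_m (abs_nonneg _) (by linarith))
        (le_m (abs_nonneg _) (by linarith)) (le_m (norm_nonneg _) (by linarith))
        (le_m (norm_nonneg _) (by linarith))
    have hm4 : m ^ 4 ≤ S := by
      rw [← hmp, ← Real.rpow_natCast]
      exact Real.rpow_le_rpow_of_exponent_ge' hm0 (by linarith) hp.le (by exact_mod_cast hp4)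
    calc ‖splitCorrection A B a b‖ ^ 2 ≤ (4 * m ^ 2) ^ 2 := by gcongr
      _ = 16 * 1 * m ^ 4 := by ring
      _ ≤ 16 * (1 + C ^ 2) * S := by
        gcongr
        exact le_add_of_nonneg_right (sq_nonneg C)
  · have hS16 : 1 ≤ 16 * S := by
      calc (1 : ℝ) ≤ (2 * m) ^ p := Real.one_le_rpow (by linarith) hp.le
        _ = 2 ^ p * S := by rw [Real.mul_rpow zero_le_two hm0, hmp]
        _ ≤ 2 ^ (4 : ℝ) * S := by gcongr; exact one_le_two
        _ = 16 * S := by norm_num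
    calc ‖splitCorrection A B a b‖ ^ 2 ≤ C ^ 2 := by
          gcongr
          exact norm_splitCorrection_le hA hB ha hb
      _ ≤ (1 + C ^ 2) * (16 * S) := by nlinarith [sq_nonneg C]
      _ = 16 * (1 + C ^ 2) * S := by ring

end SplitCorrection

section GradCorrection

/-- The embedding of the indices of the first `n` samples into those of all `2 * n` samples. -/
def firstHalf (n : ℕ) : Fin n ↪ Fin (2 * n) := Fin.castLEEmb (by omega)

/-- The embedding of the indices of the last `n` samples into those of all `2 * n` samples. -/
def secondHalf (n : ℕ) : Fin n ↪ Fin (2 * n) :=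
  (Fin.natAddEmb n).trans (finCongr (two_mul n).symm).toEmbedding

section Algebra

variable {𝒳 𝒵 E : Type*} [AddCommGroup E] [Module ℝ E]

lemma sum_fin_two_mul {M : Type*} [AddCommMonoid M] {n : ℕ} (F : Fin (2 * n) → M) :
    ∑ k, F k = ∑ k, F (firstHalf n k) + ∑ k, F (secondHalf n k) := by
  rw [← (finCongr (two_mul n).symm).sum_comp, Fin.sum_univ_add]
  rfl

lemma ratioEstimator_eq_inv_sampleMean_smul (u : 𝒳 → 𝒵 → ℝ) (g : 𝒳 → 𝒵 → E) {n : ℕ} (x : 𝒳)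
    (zs : Fin n → 𝒵) :
    ratioEstimator u g x zs = (sampleMean (u x) zs)⁻¹ • sampleMean (g x) zs := by
  rcases eq_or_ne n 0 with rfl | hn
  · simp [ratioEstimator, sampleMean]
  · rw [ratioEstimator, sampleMean, sampleMean, smul_eq_mul, mul_inv, inv_inv, smul_smul,
      mul_right_comm, mul_inv_cancel₀ (Nat.cast_ne_zero.2 hn), one_mul]

lemma sampleMean_eq_half_smul_add (f : 𝒵 → E) {n : ℕ} (zs : Fin (2 * n) → 𝒵) :
    sampleMean f zs
      = (2 : ℝ)⁻¹ • (sampleMean f (zs ∘ firstHalf n) + sampleMean f (zs ∘ secondHalf n)) := by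
  simp only [sampleMean, sum_fin_two_mul, Function.comp_apply, Nat.cast_mul, Nat.cast_ofNat,
    mul_inv, mul_smul, smul_add]

lemma gradCorrection_eq_splitCorrection (u : 𝒳 → 𝒵 → ℝ) (g : 𝒳 → 𝒵 → E) (n : ℕ) (x : 𝒳)
    (zs : Fin (2 * n) → 𝒵) :
    gradCorrection u g n x zs
      = splitCorrection (sampleMean (u x) (zs ∘ firstHalf n))
          (sampleMean (u x) (zs ∘ secondHalf n)) (sampleMean (g x) (zs ∘ firstHalf n))
          (sampleMean (g x) (zs ∘ secondHalf n)) := by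
  have hpooled : ratioEstimator u g x zs
      = (sampleMean (u x) (zs ∘ firstHalf n) + sampleMean (u x) (zs ∘ secondHalf n))⁻¹
        • (sampleMean (g x) (zs ∘ firstHalf n) + sampleMean (g x) (zs ∘ secondHalf n)) := by
    rw [ratioEstimator_eq_inv_sampleMean_smul, sampleMean_eq_half_smul_add,
      sampleMean_eq_half_smul_add (g x), smul_eq_mul, mul_inv, mul_comm, mul_smul,
      inv_smul_smul₀ (inv_ne_zero two_ne_zero)]
  rw [splitCorrection, ← hpooled, ← ratioEstimator_eq_inv_sampleMean_smul,
    ← ratioEstimator_eq_inv_sampleMean_smul]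
  rfl

lemma gradCorrection_sub_smul {u : 𝒳 → 𝒵 → ℝ} {x : 𝒳} (hu : ∀ z, 0 < u x z)
    (g : 𝒳 → 𝒵 → E) (γ : 𝒳 → E) {n : ℕ} (hn : n ≠ 0) (zs : Fin (2 * n) → 𝒵) :
    gradCorrection u (fun x z => g x z - u x z • γ x) n x zs = gradCorrection u g n x zs := by
  simp only [gradCorrection_eq_splitCorrection, sampleMean_sub_smul_const]
  exact splitCorrection_sub_smul_const (sampleMean_pos hu hn _) (sampleMean_pos hu hn _) _ _ _

end Algebra

lemma norm_gradCorrection_le {𝒳 𝒵 E : Type*} [NormedAddCommGroup E] [NormedSpace ℝ E]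
    {u : 𝒳 → 𝒵 → ℝ} {g : 𝒳 → 𝒵 → E} {x : 𝒳} {C : ℝ} {n : ℕ} (hn : n ≠ 0)
    (hu : ∀ z, 0 < u x z) (hg : ∀ z, ‖g x z‖ ≤ C * u x z) (zs : Fin (2 * n) → 𝒵) :
    ‖gradCorrection u g n x zs‖ ≤ C := by
  rw [gradCorrection_eq_splitCorrection]
  exact norm_splitCorrection_le (sampleMean_pos hu hn _) (sampleMean_pos hu hn _)
    (norm_sampleMean_le hg _) (norm_sampleMean_le hg _)

/-- The sum over the two half-samples of `‖sampleMean f‖ ^ p`, which controls the correction. -/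
def halfMeanPower {𝒵 E : Type*} [NormedAddCommGroup E] [NormedSpace ℝ E] (p : ℝ) (f : 𝒵 → E)
    {n : ℕ} (zs : Fin (2 * n) → 𝒵) : ℝ :=
  ‖sampleMean f (zs ∘ firstHalf n)‖ ^ p + ‖sampleMean f (zs ∘ secondHalf n)‖ ^ p

lemma norm_sq_gradCorrection_le {𝒳 𝒵 E : Type*} [NormedAddCommGroup E] [NormedSpace ℝ E]
    {u : 𝒳 → 𝒵 → ℝ} {g : 𝒳 → 𝒵 → E} {x : 𝒳} {C p : ℝ} {n : ℕ} (hp : 0 < p) (hp4 : p ≤ 4)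
    (hn : n ≠ 0) (hu : ∀ z, 0 < u x z) (hg : ∀ z, ‖g x z‖ ≤ C * u x z)
    (zs : Fin (2 * n) → 𝒵) :
    ‖gradCorrection u g n x zs‖ ^ 2 ≤ 16 * (1 + C ^ 2) *
      (halfMeanPower p (fun z => u x z - 1) zs + halfMeanPower p (g x) zs) := by
  simp only [gradCorrection_eq_splitCorrection, halfMeanPower, sampleMean_sub_const _ _ hn,
    Real.norm_eq_abs]
  exact norm_sq_splitCorrection_le hp hp4 (sampleMean_pos hu hn _) (sampleMean_pos hu hn _)
    (norm_sampleMean_le hg _) (norm_sampleMean_le hg _)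

lemma abs_sub_one_rpow_le {t p : ℝ} (hp : 0 ≤ p) (ht : 0 ≤ t) : |t - 1| ^ p ≤ 1 + t ^ p := by
  rcases le_total t 1 with h | h
  · have : |t - 1| ^ p ≤ 1 :=
      Real.rpow_le_one (abs_nonneg _) (abs_le.2 ⟨by linarith, by linarith⟩) hp
    linarith [Real.rpow_nonneg ht p]
  · have : |t - 1| ^ p ≤ t ^ p := by
      gcongr
      rw [abs_of_nonneg (by linarith)]
      linarith
    linarith

section Moments

variable {𝒵 E : Type*} [MeasurableSpace 𝒵] [NormedAddCommGroup E] {μ : Measure 𝒵}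
  {w : 𝒵 → ℝ} {f : 𝒵 → E} {C p : ℝ}

lemma memLp_of_integrable_rpow (hp : 0 < p) (hw_meas : AEStronglyMeasurable w μ)
    (hw : ∀ z, 0 ≤ w z) (hwp : Integrable (fun z => w z ^ p) μ) :
    MemLp w (ENNReal.ofReal p) μ := by
  rw [← integrable_norm_rpow_iff hw_meas (by simpa using hp) ENNReal.ofReal_ne_top,
    ENNReal.toReal_ofReal hp.le]
  simpa only [Real.norm_of_nonneg (hw _)] using hwp

lemma integral_norm_sub_one_rpow_le [IsProbabilityMeasure μ] (hp : 0 ≤ p) (hw : ∀ z, 0 ≤ w z)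
    (hwp : Integrable (fun z => w z ^ p) μ) :
    ∫ z, ‖w z - 1‖ ^ p ∂μ ≤ 1 + ∫ z, w z ^ p ∂μ := by
  calc ∫ z, ‖w z - 1‖ ^ p ∂μ ≤ ∫ z, (1 + w z ^ p) ∂μ :=
        integral_mono_of_nonneg (.of_forall fun z => by positivity)
          ((integrable_const 1).add hwp) (.of_forall fun z => abs_sub_one_rpow_le hp (hw z))
    _ = 1 + ∫ z, w z ^ p ∂μ := by
        rw [integral_add (integrable_const 1) hwp, integral_const, probReal_univ, one_smul]

lemma integral_norm_rpow_le_of_norm_le_mul (hp : 0 ≤ p) (hC : 0 ≤ C) (hw : ∀ z, 0 ≤ w z)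
    (hf : ∀ z, ‖f z‖ ≤ C * w z) (hwp : Integrable (fun z => w z ^ p) μ) :
    ∫ z, ‖f z‖ ^ p ∂μ ≤ C ^ p * ∫ z, w z ^ p ∂μ := by
  rw [← integral_const_mul]
  refine integral_mono_of_nonneg (.of_forall fun z => by positivity) (hwp.const_mul _)
    (.of_forall fun z => ?_)
  simp only [← Real.mul_rpow hC (hw z)]
  exact Real.rpow_le_rpow (norm_nonneg _) (hf z) hp

end Moments

/-- The constant in the conditional second moment bound
`integral_norm_sq_gradCorrection_le_of_integral_eq_zero`. -/
def correctionConst (C p : ℝ) : ℝ := 32 * (1 + C ^ 2) * (1 + C ^ p) * momentConst p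

lemma correctionConst_pos {C p : ℝ} (hC : 0 ≤ C) (hp : 1 ≤ p) : 0 < correctionConst C p := by
  have := momentConst_pos hp
  unfold correctionConst
  positivity

section FixedDataPoint

variable {𝒳 𝒵 E : Type*} [MeasurableSpace 𝒵] [NormedAddCommGroup E] [InnerProductSpace ℝ E]
  [CompleteSpace E] [MeasurableSpace E] [BorelSpace E] [SecondCountableTopology E]
  {μ : Measure 𝒵} [IsProbabilityMeasure μ] {C p : ℝ} {n : ℕ}

lemma integrable_halfMeanPower_and_integral_le {f : 𝒵 → E} (hp : 2 ≤ p) (hn : n ≠ 0)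
    (hf_meas : Measurable f) (hf : MemLp f (ENNReal.ofReal p) μ) (hf0 : ∫ z, f z ∂μ = 0) :
    Integrable (halfMeanPower (n := n) p f) (Measure.pi fun _ => μ) ∧
      ∫ zs, halfMeanPower (n := n) p f zs ∂(Measure.pi fun _ => μ)
        ≤ 2 * momentConst p * (∫ z, ‖f z‖ ^ p ∂μ) * (n : ℝ) ^ (-(p / 2)) := by
  have hint : ∀ e : Fin n ↪ Fin (2 * n), Integrable (fun zs : Fin (2 * n) → 𝒵 =>
      ‖sampleMean f (zs ∘ e)‖ ^ p) (Measure.pi fun _ => μ) := fun e =>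
    integrable_norm_rpow_of_memLp (by linarith) (memLp_sampleMean hf e)
  refine ⟨(hint _).add (hint _), (integral_add (hint _) (hint _)).trans_le ?_⟩
  have hfirst := integral_norm_sampleMean_rpow_le hp hn hf_meas hf hf0 (firstHalf n)
  have hsecond := integral_norm_sampleMean_rpow_le hp hn hf_meas hf hf0 (secondHalf n)
  linarith

variable {u : 𝒳 → 𝒵 → ℝ} {g : 𝒳 → 𝒵 → E} {x : 𝒳}

lemma integral_norm_sq_gradCorrection_le_of_integral_eq_zero (hp : 2 ≤ p) (hp4 : p ≤ 4)
    (hn : n ≠ 0) (hC : 0 ≤ C) (hu_meas : Measurable (u x)) (hu : ∀ z, 0 < u x z)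
    (hu1 : ∫ z, u x z ∂μ = 1) (hup : Integrable (fun z => u x z ^ p) μ)
    (hg_meas : Measurable (g x)) (hg : ∀ z, ‖g x z‖ ≤ C * u x z) (hg0 : ∫ z, g x z ∂μ = 0) :
    ∫ zs, ‖gradCorrection u g n x zs‖ ^ 2 ∂(Measure.pi fun _ => μ)
      ≤ correctionConst C p * (1 + ∫ z, u x z ^ p ∂μ) * (n : ℝ) ^ (-(p / 2)) := by
  have hu0 : ∀ z, 0 ≤ u x z := fun z => (hu z).le
  have huLp : MemLp (u x) (ENNReal.ofReal p) μ :=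
    memLp_of_integrable_rpow (by linarith) hu_meas.aestronglyMeasurable hu0 hup
  have hgLp : MemLp (g x) (ENNReal.ofReal p) μ :=
    huLp.of_le_mul hg_meas.aestronglyMeasurable
      (.of_forall fun z => (hg z).trans_eq (by rw [Real.norm_of_nonneg (hu0 z)]))
  have hu10 : ∫ z, (u x z - 1) ∂μ = 0 := by
    rw [integral_sub (huLp.integrable (by simp; linarith)) (integrable_const 1), hu1,
      integral_const, probReal_univ, one_smul, sub_self]
  obtain ⟨hint_u, hmean_u⟩ := integrable_halfMeanPower_and_integral_le (n := n) hp hn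
    (hu_meas.sub_const 1) (huLp.sub (memLp_const 1)) hu10
  obtain ⟨hint_g, hmean_g⟩ := integrable_halfMeanPower_and_integral_le (n := n) hp hn
    hg_meas hgLp hg0
  have hmoments : ∫ z, ‖u x z - 1‖ ^ p ∂μ + ∫ z, ‖g x z‖ ^ p ∂μ
      ≤ (1 + C ^ p) * (1 + ∫ z, u x z ^ p ∂μ) := by
    linarith [integral_norm_sub_one_rpow_le (p := p) (by linarith) hu0 hup,
      integral_norm_rpow_le_of_norm_le_mul (by linarith) hC hu0 hg hup, Real.rpow_nonneg hC p]
  have hconst : 0 < momentConst p := momentConst_pos (by linarith)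
  calc ∫ zs, ‖gradCorrection u g n x zs‖ ^ 2 ∂(Measure.pi fun _ => μ)
      ≤ ∫ zs, 16 * (1 + C ^ 2) * (halfMeanPower p (fun z => u x z - 1) zs
          + halfMeanPower p (g x) zs) ∂(Measure.pi fun _ => μ) :=
        integral_mono_of_nonneg (.of_forall fun zs => by positivity)
          ((hint_u.add hint_g).const_mul _)
          (.of_forall (norm_sq_gradCorrection_le (by linarith) hp4 hn hu hg))
    _ ≤ 16 * (1 + C ^ 2)
          * (2 * momentConst p * (∫ z, ‖u x z - 1‖ ^ p ∂μ) * (n : ℝ) ^ (-(p / 2))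
            + 2 * momentConst p * (∫ z, ‖g x z‖ ^ p ∂μ) * (n : ℝ) ^ (-(p / 2))) := by
        rw [integral_const_mul, integral_add hint_u hint_g]
        gcongr
    _ = 32 * (1 + C ^ 2) * momentConst p
          * (∫ z, ‖u x z - 1‖ ^ p ∂μ + ∫ z, ‖g x z‖ ^ p ∂μ) * (n : ℝ) ^ (-(p / 2)) := by ring
    _ ≤ 32 * (1 + C ^ 2) * momentConst p * ((1 + C ^ p) * (1 + ∫ z, u x z ^ p ∂μ))
          * (n : ℝ) ^ (-(p / 2)) := by gcongr
    _ = correctionConst C p * (1 + ∫ z, u x z ^ p ∂μ) * (n : ℝ) ^ (-(p / 2)) := by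
        rw [correctionConst]; ring

lemma integral_norm_sq_gradCorrection_le (hp : 2 ≤ p) (hp4 : p ≤ 4) (hn : n ≠ 0) (hC : 0 ≤ C)
    (hu_meas : Measurable (u x)) (hu : ∀ z, 0 < u x z) (hu1 : ∫ z, u x z ∂μ = 1)
    (hup : Integrable (fun z => u x z ^ p) μ) (hg_meas : Measurable (g x))
    (hg : ∀ z, ‖g x z‖ ≤ C * u x z) :
    ∫ zs, ‖gradCorrection u g n x zs‖ ^ 2 ∂(Measure.pi fun _ => μ)
      ≤ correctionConst (2 * C) p * (1 + ∫ z, u x z ^ p ∂μ) * (n : ℝ) ^ (-(p / 2)) := by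
  have hu_int : Integrable (u x) μ := .of_integral_ne_zero (hu1 ▸ one_ne_zero)
  have hg_int : Integrable (g x) μ :=
    (hu_int.const_mul C).mono' hg_meas.aestronglyMeasurable (.of_forall hg)
  set γ : E := ∫ z, g x z ∂μ
  have hγ_norm : ‖γ‖ ≤ C := by
    calc ‖γ‖ ≤ ∫ z, C * u x z ∂μ :=
          norm_integral_le_of_norm_le (hu_int.const_mul C) (.of_forall hg)
      _ = C := by rw [integral_const_mul, hu1, mul_one]
  have hcentred : ∫ z, (g x z - u x z • γ) ∂μ = 0 := by
    rw [integral_sub hg_int (hu_int.smul_const γ), integral_smul_const, hu1, one_smul, sub_self]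
  have hcentred_norm : ∀ z, ‖g x z - u x z • γ‖ ≤ 2 * C * u x z := fun z => by
    calc ‖g x z - u x z • γ‖ ≤ C * u x z + u x z * C := by
          refine norm_sub_le_of_le (hg z) ?_
          rw [norm_smul, Real.norm_of_nonneg (hu z).le]
          exact mul_le_mul_of_nonneg_left hγ_norm (hu z).le
      _ = 2 * C * u x z := by ring
  simp only [← gradCorrection_sub_smul hu g (fun _ => γ) hn]
  exact integral_norm_sq_gradCorrection_le_of_integral_eq_zero hp hp4 hn (by positivity) hu_meas
    hu hu1 hup (by fun_prop) hcentred_norm hcentred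

end FixedDataPoint

end GradCorrection

section JointLaw

lemma measurable_measure_pi {𝒳 𝒵 ι : Type*} [MeasurableSpace 𝒳] [MeasurableSpace 𝒵] [Fintype ι]
    (q : Kernel 𝒳 𝒵) [IsMarkovKernel q] :
    Measurable fun x => Measure.pi fun _ : ι => q x := by
  refine Measurable.measure_of_isPiSystem_of_isProbabilityMeasure generateFrom_pi.symm
    isPiSystem_pi ?_
  rintro _ ⟨t, ht, rfl⟩
  simp only [Measure.pi_pi]
  exact measurable_prod _ fun i _ => q.measurable_coe (ht i (Set.mem_univ i))

/-- The Markov kernel sending a data point `x` to the law of a family of samples drawn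
i.i.d. from `q x`. -/
def iidKernel {𝒳 𝒵 : Type*} [MeasurableSpace 𝒳] [MeasurableSpace 𝒵] (q : Kernel 𝒳 𝒵)
    [IsMarkovKernel q] (ι : Type*) [Fintype ι] : Kernel 𝒳 (ι → 𝒵) where
  toFun x := Measure.pi fun _ : ι => q x
  measurable' := measurable_measure_pi q

variable {𝒳 𝒵 E : Type*} [MeasurableSpace 𝒳] [MeasurableSpace 𝒵] {ν : Measure 𝒳}
  {q : Kernel 𝒳 𝒵} [IsMarkovKernel q] {n : ℕ}

instance {ι : Type*} [Fintype ι] : IsMarkovKernel (iidKernel q ι) where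
  isProbabilityMeasure x := inferInstanceAs (IsProbabilityMeasure (Measure.pi fun _ : ι => q x))

lemma jointExp_eq_integral [NormedAddCommGroup E] [NormedSpace ℝ E] [SFinite ν]
    {F : 𝒳 × (Fin n → 𝒵) → E} (hF : Integrable F (ν ⊗ₘ iidKernel q (Fin n))) :
    jointExp ν q n (fun x zs => F (x, zs)) = ∫ y, F y ∂(ν ⊗ₘ iidKernel q (Fin n)) :=
  (Measure.integral_compProd hF).symm

lemma integral_norm_sub_integral_sq_le {Ω : Type*} [MeasurableSpace Ω] [NormedAddCommGroup E]
    [InnerProductSpace ℝ E] [CompleteSpace E] {P : Measure Ω} [IsProbabilityMeasure P]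
    {f : Ω → E} (hf : MemLp f 2 P) :
    ∫ ω, ‖f ω - ∫ ω', f ω' ∂P‖ ^ 2 ∂P ≤ ∫ ω, ‖f ω‖ ^ 2 ∂P := by
  set m : E := ∫ ω, f ω ∂P with hm
  have hf_int : Integrable f P := hf.integrable one_le_two
  have hf_sq : Integrable (fun ω => ‖f ω‖ ^ 2) P := hf.integrable_norm_pow two_ne_zero
  have hcross : Integrable (fun ω => 2 * ⟪m, f ω⟫) P := (hf_int.const_inner m).const_mul 2
  have hdiff : Integrable (fun ω => ‖f ω‖ ^ 2 - 2 * ⟪m, f ω⟫) P := hf_sq.sub hcross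
  calc ∫ ω, ‖f ω - m‖ ^ 2 ∂P = ∫ ω, (‖f ω‖ ^ 2 - 2 * ⟪m, f ω⟫ + ‖m‖ ^ 2) ∂P := by
        simp only [norm_sub_sq_real, real_inner_comm]
    _ = ∫ ω, ‖f ω‖ ^ 2 ∂P - ‖m‖ ^ 2 := by
        rw [integral_add hdiff (integrable_const _), integral_sub hf_sq hcross,
          integral_const_mul, integral_inner hf_int, ← hm, real_inner_self_eq_norm_sq,
          integral_const, probReal_univ, one_smul]
        ring
    _ ≤ ∫ ω, ‖f ω‖ ^ 2 ∂P := sub_le_self _ (sq_nonneg _)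

lemma jointExp_norm_sub_sq_le [NormedAddCommGroup E] [InnerProductSpace ℝ E] [CompleteSpace E]
    [IsProbabilityMeasure ν] {f : 𝒳 → (Fin n → 𝒵) → E}
    (hf : MemLp (Function.uncurry f) 2 (ν ⊗ₘ iidKernel q (Fin n))) :
    jointExp ν q n (fun x zs => ‖f x zs - jointExp ν q n f‖ ^ 2)
      ≤ jointExp ν q n (fun x zs => ‖f x zs‖ ^ 2) := by
  have hsub : MemLp (fun y => Function.uncurry f y - jointExp ν q n f) 2
      (ν ⊗ₘ iidKernel q (Fin n)) := hf.sub (memLp_const _)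
  have hmean : jointExp ν q n f = ∫ y, Function.uncurry f y ∂(ν ⊗ₘ iidKernel q (Fin n)) :=
    jointExp_eq_integral (hf.integrable one_le_two)
  have hvariance := jointExp_eq_integral (hsub.integrable_norm_pow two_ne_zero)
  have hsecond := jointExp_eq_integral (hf.integrable_norm_pow two_ne_zero)
  simp only [Function.uncurry_apply_pair] at hvariance hsecond
  rw [hvariance, hsecond, hmean]
  exact integral_norm_sub_integral_sq_le hf

end JointLaw

section VarianceDecay

lemma integrable_rpow_of_le {Ω : Type*} [MeasurableSpace Ω] {μ : Measure Ω} [IsFiniteMeasure μ]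
    {w : Ω → ℝ} {p s : ℝ} (hw_meas : AEStronglyMeasurable w μ) (hw : ∀ ω, 0 ≤ w ω) (hp : 0 ≤ p)
    (hps : p ≤ s) (hws : Integrable (fun ω => w ω ^ s) μ) : Integrable (fun ω => w ω ^ p) μ := by
  simpa only [Real.norm_of_nonneg (hw _)] using
    integrable_norm_rpow_of_le hw_meas hp (hp.trans hps) hps
      (by simpa only [Real.norm_of_nonneg (hw _)] using hws)

variable {𝒳 𝒵 E : Type*} [MeasurableSpace 𝒳] [MeasurableSpace 𝒵] [NormedAddCommGroup E]
  [InnerProductSpace ℝ E] [MeasurableSpace E] [BorelSpace E] [SecondCountableTopology E]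
  {u : 𝒳 → 𝒵 → ℝ} {g : 𝒳 → 𝒵 → E} {C p : ℝ} {n : ℕ}

lemma measurable_uncurry_gradCorrection (hu : Measurable (Function.uncurry u))
    (hg : Measurable (Function.uncurry g)) :
    Measurable (Function.uncurry (gradCorrection u g n)) := by
  unfold gradCorrection ratioEstimator
  fun_prop

variable [CompleteSpace E] {ν : Measure 𝒳} [IsProbabilityMeasure ν] {q : Kernel 𝒳 𝒵}
  [IsMarkovKernel q]

lemma jointExp_norm_sq_gradCorrection_le (hp : 2 ≤ p) (hp4 : p ≤ 4) (hn : n ≠ 0) (hC : 0 ≤ C)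
    (hu_meas : Measurable (Function.uncurry u)) (hu_pos : ∀ x z, 0 < u x z)
    (hu_norm : ∀ᵐ x ∂ν, ∫ z, u x z ∂(q x) = 1)
    (hup : Integrable (fun y : 𝒳 × 𝒵 => u y.1 y.2 ^ p) (ν ⊗ₘ q))
    (hg_meas : Measurable (Function.uncurry g)) (hg : ∀ x z, ‖g x z‖ ≤ C * u x z) :
    jointExp ν q (2 * n) (fun x zs => ‖gradCorrection u g n x zs‖ ^ 2)
      ≤ correctionConst (2 * C) p * (1 + ∫ y : 𝒳 × 𝒵, u y.1 y.2 ^ p ∂(ν ⊗ₘ q))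
        * (n : ℝ) ^ (-(p / 2)) := by
  obtain ⟨hup_section, hup_norm⟩ := (Measure.integrable_compProd_iff hup.1).1 hup
  have hmoment : Integrable (fun x => ∫ z, u x z ^ p ∂(q x)) ν := by
    simpa only [Real.norm_of_nonneg (Real.rpow_nonneg (hu_pos _ _).le p)] using hup_norm
  have hsection : ∀ᵐ x ∂ν,
      ∫ zs, ‖gradCorrection u g n x zs‖ ^ 2 ∂(Measure.pi fun _ : Fin (2 * n) => q x)
        ≤ correctionConst (2 * C) p * (1 + ∫ z, u x z ^ p ∂(q x)) * (n : ℝ) ^ (-(p / 2)) := by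
    filter_upwards [hu_norm, hup_section] with x hu1 hup_x
    exact integral_norm_sq_gradCorrection_le hp hp4 hn hC hu_meas.of_uncurry_left (hu_pos x) hu1
      hup_x hg_meas.of_uncurry_left (hg x)
  calc jointExp ν q (2 * n) (fun x zs => ‖gradCorrection u g n x zs‖ ^ 2)
      ≤ ∫ x, correctionConst (2 * C) p * (1 + ∫ z, u x z ^ p ∂(q x)) * (n : ℝ) ^ (-(p / 2)) ∂ν :=
        integral_mono_of_nonneg (.of_forall fun x => integral_nonneg fun zs => by positivity)
          ((((integrable_const 1).add hmoment).const_mul _).mul_const _) hsection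
    _ = _ := by
        rw [integral_mul_const, integral_const_mul, integral_add (integrable_const 1) hmoment,
          integral_const, probReal_univ, one_smul, Measure.integral_compProd hup]

theorem mlmc_gradient_variance_decay_general {s : ℝ} (hs : 2 ≤ s)
    (hu_meas : Measurable (Function.uncurry u)) (hu_pos : ∀ x z, 0 < u x z)
    (hu_norm : ∀ᵐ x ∂ν, ∫ z, u x z ∂(q x) = 1)
    (hus : Integrable (fun y : 𝒳 × 𝒵 => u y.1 y.2 ^ s) (ν ⊗ₘ q))
    (hg_meas : Measurable (Function.uncurry g)) (hg : ∀ x z, ‖g x z‖ ≤ C * u x z) :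
    ∃ c > (0 : ℝ), ∀ n : ℕ, n ≠ 0 →
      jointExp ν q (2 * n) (fun x zs =>
          ‖gradCorrection u g n x zs - jointExp ν q (2 * n) (gradCorrection u g n)‖ ^ 2)
        ≤ c * (n : ℝ) ^ (-(min (s / 2) 2)) := by
  set p : ℝ := min s 4 with hp_def
  have hp : 2 ≤ p := le_min hs (by norm_num)
  have hβ : min (s / 2) 2 = p / 2 := by
    rw [hp_def, ← min_div_div_right zero_le_two]
    norm_num
  have hup : Integrable (fun y : 𝒳 × 𝒵 => u y.1 y.2 ^ p) (ν ⊗ₘ q) :=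
    integrable_rpow_of_le (w := Function.uncurry u) hu_meas.aestronglyMeasurable
      (fun y => (hu_pos y.1 y.2).le) (by linarith) (min_le_left s 4) hus
  have hg_abs : ∀ x z, ‖g x z‖ ≤ |C| * u x z := fun x z =>
    (hg x z).trans (mul_le_mul_of_nonneg_right (le_abs_self C) (hu_pos x z).le)
  have hmoment : 0 ≤ ∫ y : 𝒳 × 𝒵, u y.1 y.2 ^ p ∂(ν ⊗ₘ q) :=
    integral_nonneg fun y => Real.rpow_nonneg (hu_pos y.1 y.2).le p
  have hconst : 0 < correctionConst (2 * |C|) p := correctionConst_pos (by positivity) (by linarith)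
  refine ⟨correctionConst (2 * |C|) p * (1 + ∫ y : 𝒳 × 𝒵, u y.1 y.2 ^ p ∂(ν ⊗ₘ q)),
    by positivity, fun n hn => ?_⟩
  have hLp : MemLp (Function.uncurry (gradCorrection u g n)) 2 (ν ⊗ₘ iidKernel q (Fin (2 * n))) :=
    .of_bound (measurable_uncurry_gradCorrection hu_meas hg_meas).aestronglyMeasurable C
      (.of_forall fun y => norm_gradCorrection_le hn (hu_pos y.1) (hg y.1) y.2)
  rw [hβ]
  exact (jointExp_norm_sub_sq_le hLp).trans
    (jointExp_norm_sq_gradCorrection_le hp (min_le_right s 4) hn (abs_nonneg C) hu_meas hu_pos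
      hu_norm hup hg_meas hg_abs)

end VarianceDecay

lemma exists_norm_le_mul_of_abs_apply_div_le {ι 𝒳 𝒵 : Type*} [Fintype ι] {u : 𝒳 → 𝒵 → ℝ}
    {g : 𝒳 → 𝒵 → EuclideanSpace ℝ ι} (hu : ∀ x z, 0 < u x z)
    (hsup : ∃ M : ℝ, ∀ x z i, |g x z i / u x z| ≤ M) :
    ∃ C : ℝ, ∀ x z, ‖g x z‖ ≤ C * u x z := by
  obtain ⟨M, hM⟩ := hsup
  refine ⟨√(Fintype.card ι) * M, fun x z => ?_⟩
  have hcoord : ∀ i, ‖g x z i‖ ≤ M * u x z := fun i => by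
    have := hM x z i
    rwa [abs_div, abs_of_pos (hu x z), div_le_iff₀ (hu x z)] at this
  rcases isEmpty_or_nonempty ι with hι | ⟨⟨i⟩⟩
  · simp [EuclideanSpace.norm_eq]
  have hM0 : 0 ≤ M * u x z := (norm_nonneg _).trans (hcoord i)
  calc ‖g x z‖ ≤ √(∑ _i : ι, (M * u x z) ^ 2) := by
        rw [EuclideanSpace.norm_eq]
        gcongr with i
        exact hcoord i
    _ = √(Fintype.card ι) * M * u x z := by
        rw [sum_const, card_univ, nsmul_eq_mul, Real.sqrt_mul (Nat.cast_nonneg _),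
          Real.sqrt_sq hM0, mul_assoc]

lemma natCast_two_pow_pred_rpow_neg (β : ℝ) {ℓ : ℕ} (hℓ : 1 ≤ ℓ) :
    ((2 ^ (ℓ - 1) : ℕ) : ℝ) ^ (-β) = 2 ^ β * 2 ^ (-β * ℓ) := by
  rw [Nat.cast_pow, Nat.cast_ofNat, ← Real.rpow_natCast, ← Real.rpow_mul zero_le_two,
    ← Real.rpow_add two_pos, Nat.cast_sub hℓ]
  congr 1; push_cast; ring

/-- **Variance decay of the coupled MLMC gradient corrections** (Theorem 3 of the paper).
Let `X ~ ν` and, conditionally on `X`, `Z₁, Z₂, …` i.i.d. `~ q(·; X)`; let `u > 0` be the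
normalized importance weight (`∫ u q(dz;x) = 1` a.e.) and `g` the weighted gradient with
`∫ g q(dz;x) = G(x)` a.e.  If `E[u^s] < ∞` for some `s ≥ 2` and
`sup_{x,z} ‖g(x,z)/u(x,z)‖_∞ < ∞`, then the coupled level-`ℓ` gradient correction
`∇Δ_ℓ = Ĝ_{2^ℓ} − ½(Ĝ_{2^{ℓ−1}}⁽ᵃ⁾ + Ĝ_{2^{ℓ−1}}⁽ᵇ⁾)` satisfies
`E[‖∇Δ_ℓ − E[∇Δ_ℓ]‖₂²] ≤ c·2^{−βℓ}` with `β = min(s/2, 2)`. -/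
theorem mlmc_gradient_variance_decay
    {𝒳 𝒵 : Type*} [MeasurableSpace 𝒳] [MeasurableSpace 𝒵] {d : ℕ}
    (ν : Measure 𝒳) [IsProbabilityMeasure ν]
    (q : Kernel 𝒳 𝒵) [IsMarkovKernel q]
    (u : 𝒳 → 𝒵 → ℝ) (hu_meas : Measurable (Function.uncurry u))
    (hu_pos : ∀ x z, 0 < u x z)
    (hu_norm : ∀ᵐ x ∂ν, ∫ z, u x z ∂(q x) = 1)
    (g : 𝒳 → 𝒵 → EuclideanSpace ℝ (Fin d)) (hg_meas : Measurable (Function.uncurry g))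
    (G : 𝒳 → EuclideanSpace ℝ (Fin d))
    (hG : ∀ᵐ x ∂ν, ∫ z, g x z ∂(q x) = G x)
    (s : ℝ) (hs : 2 ≤ s)
    (hus : Integrable (fun p : 𝒳 × 𝒵 => u p.1 p.2 ^ s) (ν ⊗ₘ q))
    (hsup : ∃ Csup : ℝ, ∀ x z i, |g x z i / u x z| ≤ Csup) :
    ∃ c > (0 : ℝ), ∀ ℓ : ℕ, 1 ≤ ℓ →
      jointExp ν q (2 * 2 ^ (ℓ - 1)) (fun x zs =>
          ‖gradCorrection u g (2 ^ (ℓ - 1)) x zs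
              - jointExp ν q (2 * 2 ^ (ℓ - 1)) (gradCorrection u g (2 ^ (ℓ - 1)))‖ ^ 2)
        ≤ c * (2 : ℝ) ^ (-(min (s / 2) 2) * ℓ) := by
  obtain ⟨C, hg⟩ := exists_norm_le_mul_of_abs_apply_div_le hu_pos hsup
  obtain ⟨c, hc, hdecay⟩ :=
    mlmc_gradient_variance_decay_general hs hu_meas hu_pos hu_norm hus hg_meas hg
  refine ⟨c * 2 ^ min (s / 2) 2, by positivity, fun ℓ hℓ => ?_⟩
  rw [mul_assoc, ← natCast_two_pow_pred_rpow_neg _ hℓ]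
  exact hdecay (2 ^ (ℓ - 1)) (by positivity)
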